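/- Exact (non-asymptotic) confidence interval: for every p ∈ [0,1], every α ∈ (0,1) and every n ≥ 2, ℙ( |p̂_n − p| ≤ 2·√(3 n log(2/α))/V_n ) ≥ 1 − α. Equivalently, for every x > 0 one has ℙ( V_n·|p̂_n − p| ≥ 2 n x ) ≤ 2·exp(−n x²/3). -/

import Mathlib

open MeasureTheory ProbabilityTheory Filter Finset
open scoped BoundedContinuousFunction ENNReal NNReal Topology

noncomputable section

variable {Ω : Type*}

/-- Position of the elephant random walk: `S n = X 1 + ⋯ + X n`. -/
def erwS (X : ℕ → Ω → ℝ) (n : ℕ) (ω : Ω) : ℝ :=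
  ∑ k ∈ Finset.Icc 1 n, X k ω

/-- `V n = 4 ∑_{k=1}^{n-1} (S k / k)²`, the approximate conditional Fisher information. -/
def erwV (X : ℕ → Ω → ℝ) (n : ℕ) (ω : Ω) : ℝ :=
  4 * ∑ k ∈ Finset.Icc 1 (n - 1), (erwS X k ω / k) ^ 2

/-- The quasi-maximum likelihood estimator `p̂ n` of the memory parameter. -/
def erwPhat (X : ℕ → Ω → ℝ) (n : ℕ) (ω : Ω) : ℝ :=
  (∑ k ∈ Finset.Icc 1 (n - 1), (erwS X k ω / k) * (X (k + 1) ω + erwS X k ω / k)) /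
    (2 * ∑ k ∈ Finset.Icc 1 (n - 1), (erwS X k ω / k) ^ 2)

/-- The elephant random walk hypotheses with memory parameter `p ∈ [0,1]`:
the steps take values in `{-1, 1}`, are adapted to the filtration `ℱ`
(which plays the role of `σ(X_1, …, X_n)`), and
`E[X_{n+1} | ℱ_n] = (2p - 1) · S_n / n` almost surely. -/
def IsERW {m0 : MeasurableSpace Ω} (μ : Measure Ω) (ℱ : Filtration ℕ m0)
    (X : ℕ → Ω → ℝ) (p : ℝ) : Prop :=
  0 ≤ p ∧ p ≤ 1 ∧
  (∀ n, 1 ≤ n → ∀ ω, X n ω = 1 ∨ X n ω = -1) ∧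
  (∀ n, 1 ≤ n → Measurable[ℱ n] (X n)) ∧
  (∀ n, 1 ≤ n → μ[X (n + 1) | ℱ n] =ᵐ[μ] fun ω => (2 * p - 1) * (erwS X n ω / n))

/-!
The rescaled error `V_n (p̂_n - p)` is twice the martingale
`∑ (S_k / k) (X_{k+1} - E[X_{k+1} | ℱ_k])`. Given `ℱ_k`, its `k`-th increment lies in an interval of
length `2 |S_k / k| ≤ 2`, so Hoeffding's lemma, applied conditionally, makes the martingale
sub-Gaussian with variance proxy `n`. Chernoff's bound then gives the tail `2 exp (-n x² / 2)`.

Conditional Hoeffding is derived from the convexity bound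
`exp (l y) ≤ cosh l + y sinh l` for `|y| ≤ 1`, which is affine in `y` and hence survives
conditioning on any `σ`-algebra, without regular conditional distributions.
-/

section Hoeffding

variable {m m0 : MeasurableSpace Ω} {μ : Measure Ω}

/- The left-hand side is the centred moment generating function, at `l`, of the law on `{-1, 1}`
with mean `y`. -/
lemma exp_neg_mul_cosh_add_mul_sinh_le {y : ℝ} (hy : |y| ≤ 1) (l : ℝ) :
    Real.exp (-(l * y)) * (Real.cosh l + y * Real.sinh l) ≤ Real.exp (l ^ 2 / 2) := by
  obtain ⟨hy_lower, hy_upper⟩ := abs_le.1 hy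
  let q : unitInterval := ⟨(1 + y) / 2, by constructor <;> linarith⟩
  let ν : Measure ℝ := bernoulliMeasure 1 (-1) q
  have integral_eq (f : ℝ → ℝ) : ∫ x, f x ∂ν = (1 + y) / 2 * f 1 + (1 - y) / 2 * f (-1) := by
    rw [integral_bernoulliMeasure, smul_eq_mul, smul_eq_mul]
    ring
  have mean_eq : ∫ x, x ∂ν = y := by
    rw [integral_eq fun x ↦ x]
    ring
  have mem_Icc : ∀ᵐ x ∂ν, x ∈ Set.Icc (-1 : ℝ) 1 :=
    (mem_ae_iff_prob_eq_one measurableSet_Icc).2 <|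
      bernoulliMeasure_apply_of_mem_of_mem q measurableSet_Icc (by norm_num) (by norm_num)
  calc Real.exp (-(l * y)) * (Real.cosh l + y * Real.sinh l)
      = mgf (fun x ↦ x - ∫ x, x ∂ν) ν l := by
        rw [mgf, integral_eq fun x ↦ Real.exp (l * (x - ∫ x, x ∂ν)), mean_eq, Real.cosh_eq,
          Real.sinh_eq]
        simp only [sub_eq_add_neg, mul_add, mul_neg, mul_one, Real.exp_add]
        ring
    _ ≤ Real.exp (((‖(1 : ℝ) - -1‖₊ / 2) ^ 2 : ℝ≥0) * l ^ 2 / 2) :=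
        (hasSubgaussianMGF_of_mem_Icc aemeasurable_id mem_Icc).mgf_le l
    _ = Real.exp (l ^ 2 / 2) := by norm_num

lemma integrable_exp_of_ae_le [IsFiniteMeasure μ] {Z : Ω → ℝ} {K : ℝ}
    (hZ : AEStronglyMeasurable Z μ) (hZK : ∀ᵐ ω ∂μ, Z ω ≤ K) :
    Integrable (fun ω ↦ Real.exp (Z ω)) μ := by
  simpa only [one_mul] using integrable_exp_mul_of_le 1 K zero_le_one hZ.aemeasurable hZK

lemma ae_mul_le_of_abs_le {l Y : Ω → ℝ} {C K : ℝ} (hlC : ∀ᵐ ω ∂μ, |l ω| ≤ C)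
    (hYK : ∀ᵐ ω ∂μ, |Y ω| ≤ K) : ∀ᵐ ω ∂μ, l ω * Y ω ≤ C * K := by
  filter_upwards [hlC, hYK] with ω hlω hYω
  calc l ω * Y ω ≤ |l ω| * |Y ω| := (le_abs_self _).trans_eq (abs_mul _ _)
    _ ≤ C * K := mul_le_mul hlω hYω (abs_nonneg _) ((abs_nonneg _).trans hlω)

lemma ae_abs_sub_condExp_le {Y : Ω → ℝ} {K : ℝ} (hYK : ∀ᵐ ω ∂μ, |Y ω| ≤ K) :
    ∀ᵐ ω ∂μ, |Y ω - (μ[Y | m]) ω| ≤ 2 * K := by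
  filter_upwards [hYK, ae_bdd_abs_condExp_of_ae_bdd_abs (m := m) hYK] with ω hYω hEω
  exact (abs_sub _ _).trans (by linarith)

lemma condExp_exp_mul_le_cosh_add_mul_sinh [IsFiniteMeasure μ] (hm : m ≤ m0) {l Y : Ω → ℝ} {C : ℝ}
    (hl : StronglyMeasurable[m] l) (hlC : ∀ᵐ ω ∂μ, |l ω| ≤ C)
    (hY : AEStronglyMeasurable Y μ) (hY1 : ∀ᵐ ω ∂μ, |Y ω| ≤ 1) :
    μ[fun ω ↦ Real.exp (l ω * Y ω) | m] ≤ᵐ[μ]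
      fun ω ↦ Real.cosh (l ω) + (μ[Y | m]) ω * Real.sinh (l ω) := by
  have cosh_sm : StronglyMeasurable[m] fun ω ↦ Real.cosh (l ω) :=
    Real.continuous_cosh.comp_stronglyMeasurable hl
  have sinh_sm : StronglyMeasurable[m] fun ω ↦ Real.sinh (l ω) :=
    Real.continuous_sinh.comp_stronglyMeasurable hl
  have cosh_int : Integrable (fun ω ↦ Real.cosh (l ω)) μ := by
    refine .of_bound (cosh_sm.mono hm).aestronglyMeasurable (Real.cosh C) ?_
    filter_upwards [hlC] with ω hω
    rw [Real.norm_of_nonneg (Real.cosh_pos _).le]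
    exact Real.cosh_le_cosh.2 (hω.trans (le_abs_self C))
  have sinh_int : Integrable (fun ω ↦ Real.sinh (l ω)) μ := by
    refine .of_bound (sinh_sm.mono hm).aestronglyMeasurable (Real.sinh C) ?_
    filter_upwards [hlC] with ω hω
    rw [Real.norm_eq_abs, Real.abs_sinh]
    exact Real.sinh_le_sinh.2 hω
  have Y_int : Integrable Y μ := .of_bound hY 1 hY1
  have Y_sinh_int : Integrable (Y * fun ω ↦ Real.sinh (l ω)) μ := sinh_int.bdd_mul hY hY1
  have exp_le : (fun ω ↦ Real.exp (l ω * Y ω)) ≤ᵐ[μ]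
      (fun ω ↦ Real.cosh (l ω)) + Y * (fun ω ↦ Real.sinh (l ω)) := by
    filter_upwards [hY1] with ω hω
    rw [mul_comm (l ω)]
    exact Real.exp_mul_le_cosh_add_mul_sinh hω (l ω)
  have exp_int := integrable_exp_of_ae_le ((hl.mono hm).aestronglyMeasurable.mul hY)
    (ae_mul_le_of_abs_le hlC hY1)
  filter_upwards [condExp_mono (m := m) exp_int (cosh_int.add Y_sinh_int) exp_le,
    condExp_add cosh_int Y_sinh_int m,
    condExp_mul_of_stronglyMeasurable_right sinh_sm Y_sinh_int Y_int] with ω hle hadd hmul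
  refine hle.trans_eq ?_
  rw [hadd, Pi.add_apply, condExp_of_stronglyMeasurable hm cosh_sm cosh_int]
  exact congrArg _ hmul

lemma condExp_exp_mul_sub_condExp_le [IsFiniteMeasure μ] (hm : m ≤ m0) {l Y : Ω → ℝ} {C : ℝ}
    (hl : StronglyMeasurable[m] l) (hlC : ∀ᵐ ω ∂μ, |l ω| ≤ C)
    (hY : AEStronglyMeasurable Y μ) (hY1 : ∀ᵐ ω ∂μ, |Y ω| ≤ 1) :
    μ[fun ω ↦ Real.exp (l ω * (Y ω - (μ[Y | m]) ω)) | m] ≤ᵐ[μ]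
      fun ω ↦ Real.exp (l ω ^ 2 / 2) := by
  let E : Ω → ℝ := μ[Y | m]
  have E_sm : StronglyMeasurable[m] E := stronglyMeasurable_condExp
  have E_le : ∀ᵐ ω ∂μ, |E ω| ≤ 1 := ae_bdd_abs_condExp_of_ae_bdd_abs hY1
  have split : (fun ω ↦ Real.exp (l ω * (Y ω - E ω))) =
      (fun ω ↦ Real.exp (-(l ω * E ω))) * fun ω ↦ Real.exp (l ω * Y ω) := by
    ext ω
    rw [Pi.mul_apply, ← Real.exp_add]
    ring_nf
  have centred_int := integrable_exp_of_ae_le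
    ((hl.mono hm).aestronglyMeasurable.mul (hY.sub (E_sm.mono hm).aestronglyMeasurable))
    (ae_mul_le_of_abs_le hlC (ae_abs_sub_condExp_le hY1))
  have exp_int := integrable_exp_of_ae_le ((hl.mono hm).aestronglyMeasurable.mul hY)
    (ae_mul_le_of_abs_le hlC hY1)
  have pull_out := condExp_mul_of_stronglyMeasurable_left (m := m)
    (Real.continuous_exp.comp_stronglyMeasurable (hl.mul E_sm).neg) (split ▸ centred_int) exp_int
  filter_upwards [pull_out, condExp_exp_mul_le_cosh_add_mul_sinh hm hl hlC hY hY1, E_le]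
    with ω hpull hcond hE
  calc (μ[fun ω ↦ Real.exp (l ω * (Y ω - E ω)) | m]) ω
      = Real.exp (-(l ω * E ω)) * (μ[fun ω ↦ Real.exp (l ω * Y ω) | m]) ω := by
        rw [split]; exact hpull
    _ ≤ Real.exp (-(l ω * E ω)) * (Real.cosh (l ω) + E ω * Real.sinh (l ω)) := by gcongr
    _ ≤ Real.exp (l ω ^ 2 / 2) := exp_neg_mul_cosh_add_mul_sinh_le hE (l ω)

lemma condExp_exp_mul_sub_condExp_le_of_abs_le [IsFiniteMeasure μ] (hm : m ≤ m0) {l Y : Ω → ℝ}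
    {C : ℝ} (hl : StronglyMeasurable[m] l) (hlC : ∀ᵐ ω ∂μ, |l ω| ≤ C)
    (hY : AEStronglyMeasurable Y μ) (hY1 : ∀ᵐ ω ∂μ, |Y ω| ≤ 1) :
    μ[fun ω ↦ Real.exp (l ω * (Y ω - (μ[Y | m]) ω)) | m] ≤ᵐ[μ] fun _ ↦ Real.exp (C ^ 2 / 2) := by
  filter_upwards [condExp_exp_mul_sub_condExp_le hm hl hlC hY hY1, hlC] with ω hcond hlω
  have sq_le : l ω ^ 2 ≤ C ^ 2 := sq_le_sq' (abs_le.1 hlω).1 (abs_le.1 hlω).2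
  exact hcond.trans (by gcongr)

end Hoeffding

section Azuma

variable {m m0 : MeasurableSpace Ω} {μ : Measure Ω}

lemma integral_mul_le_integral_mul_of_condExp_le [IsFiniteMeasure μ] (hm : m ≤ m0) {F G : Ω → ℝ}
    {D : ℝ} (hFm : StronglyMeasurable[m] F) (hF0 : 0 ≤ᵐ[μ] F) (hF : Integrable F μ)
    (hG : Integrable G μ) (hFG : Integrable (F * G) μ) (hGD : μ[G | m] ≤ᵐ[μ] fun _ ↦ D) :
    ∫ ω, (F * G) ω ∂μ ≤ (∫ ω, F ω ∂μ) * D := by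
  have condExp_le : μ[F * G | m] ≤ᵐ[μ] fun ω ↦ F ω * D := by
    filter_upwards [condExp_mul_of_stronglyMeasurable_left hFm hFG hG, hF0, hGD]
      with ω hpull hFω hGω
    exact hpull.trans_le (mul_le_mul_of_nonneg_left hGω hFω)
  calc ∫ ω, (F * G) ω ∂μ = ∫ ω, (μ[F * G | m]) ω ∂μ := (integral_condExp hm).symm
    _ ≤ ∫ ω, F ω * D ∂μ := integral_mono_ae integrable_condExp (hF.mul_const D) condExp_le
    _ = (∫ ω, F ω ∂μ) * D := integral_mul_const _ _

lemma hasSubgaussianMGF_add_mul_sub_condExp [IsFiniteMeasure μ] (hm : m ≤ m0)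
    {W s Y : Ω → ℝ} {c σ : ℝ≥0} (hW : HasSubgaussianMGF W c μ) (hWm : StronglyMeasurable[m] W)
    (hs : StronglyMeasurable[m] s) (hsσ : ∀ᵐ ω ∂μ, |s ω| ≤ σ)
    (hY : AEStronglyMeasurable Y μ) (hY1 : ∀ᵐ ω ∂μ, |Y ω| ≤ 1) :
    HasSubgaussianMGF (fun ω ↦ W ω + s ω * (Y ω - (μ[Y | m]) ω)) (c + σ ^ 2) μ := by
  let G (t : ℝ) (ω : Ω) : ℝ := Real.exp (t * s ω * (Y ω - (μ[Y | m]) ω))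
  have ts_sm (t : ℝ) : StronglyMeasurable[m] fun ω ↦ t * s ω := hs.const_mul t
  have ts_le (t : ℝ) : ∀ᵐ ω ∂μ, |t * s ω| ≤ |t| * σ := by
    filter_upwards [hsσ] with ω hω
    rw [abs_mul]
    gcongr
  have G_sm (t : ℝ) : AEStronglyMeasurable (G t) μ :=
    Real.continuous_exp.comp_aestronglyMeasurable <|
      ((ts_sm t).mono hm).aestronglyMeasurable.mul
        (hY.sub integrable_condExp.aestronglyMeasurable)
  have G_le (t : ℝ) : ∀ᵐ ω ∂μ, ‖G t ω‖ ≤ Real.exp (|t| * σ * (2 * 1)) := by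
    filter_upwards [ae_mul_le_of_abs_le (ts_le t) (ae_abs_sub_condExp_le hY1)] with ω hω
    rwa [Real.norm_of_nonneg (Real.exp_pos _).le, Real.exp_le_exp]
  have split (t : ℝ) : (fun ω ↦ Real.exp (t * (W ω + s ω * (Y ω - (μ[Y | m]) ω)))) =
      (fun ω ↦ Real.exp (t * W ω)) * G t := by
    ext ω
    rw [Pi.mul_apply, ← Real.exp_add]
    ring_nf
  have prod_int (t : ℝ) : Integrable ((fun ω ↦ Real.exp (t * W ω)) * G t) μ :=
    (hW.integrable_exp_mul t).mul_bdd (G_sm t) (G_le t)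
  refine ⟨fun t ↦ split t ▸ prod_int t, fun t ↦ ?_⟩
  calc mgf (fun ω ↦ W ω + s ω * (Y ω - (μ[Y | m]) ω)) μ t
      = ∫ ω, ((fun ω ↦ Real.exp (t * W ω)) * G t) ω ∂μ := by rw [mgf, split]
    _ ≤ mgf W μ t * Real.exp ((|t| * σ) ^ 2 / 2) :=
        integral_mul_le_integral_mul_of_condExp_le hm
          (Real.continuous_exp.comp_stronglyMeasurable (hWm.const_mul t))
          (.of_forall fun _ ↦ (Real.exp_pos _).le) (hW.integrable_exp_mul t)
          (.of_bound (G_sm t) _ (G_le t)) (prod_int t)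
          (condExp_exp_mul_sub_condExp_le_of_abs_le hm (ts_sm t) (ts_le t) hY hY1)
    _ ≤ Real.exp (c * t ^ 2 / 2) * Real.exp ((|t| * σ) ^ 2 / 2) := by
        gcongr
        exact hW.mgf_le t
    _ = Real.exp ((c + σ ^ 2 : ℝ≥0) * t ^ 2 / 2) := by
        rw [← Real.exp_add, mul_pow, sq_abs]
        push_cast
        ring_nf

theorem hasSubgaussianMGF_sum_mul_sub_condExp [IsProbabilityMeasure μ] (ℱ : Filtration ℕ m0)
    {s Y : ℕ → Ω → ℝ} {σ : ℕ → ℝ≥0}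
    (hs : ∀ k, StronglyMeasurable[ℱ k] (s k)) (hsσ : ∀ k, ∀ᵐ ω ∂μ, |s k ω| ≤ σ k)
    (hY : ∀ k, StronglyMeasurable[ℱ (k + 1)] (Y k)) (hY1 : ∀ k, ∀ᵐ ω ∂μ, |Y k ω| ≤ 1) (n : ℕ) :
    HasSubgaussianMGF (fun ω ↦ ∑ k ∈ range n, s k ω * (Y k ω - (μ[Y k | ℱ k]) ω))
      (∑ k ∈ range n, σ k ^ 2) μ := by
  have sum_sm (n : ℕ) : StronglyMeasurable[ℱ n]
      fun ω ↦ ∑ k ∈ range n, s k ω * (Y k ω - (μ[Y k | ℱ k]) ω) := by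
    refine Finset.stronglyMeasurable_fun_sum _ fun k hk ↦ ?_
    have hkn : k + 1 ≤ n := Finset.mem_range.1 hk
    have hk_mono : ℱ k ≤ ℱ n := ℱ.mono ((Nat.le_succ k).trans hkn)
    exact ((hs k).mono hk_mono).mul
      (((hY k).mono (ℱ.mono hkn)).sub (stronglyMeasurable_condExp.mono hk_mono))
  induction n with
  | zero => simp
  | succ n ih =>
    simp only [Finset.sum_range_succ]
    exact hasSubgaussianMGF_add_mul_sub_condExp (ℱ.le n) ih (sum_sm n) (hs n) (hsσ n)
      ((hY n).mono (ℱ.le (n + 1))).aestronglyMeasurable (hY1 n)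

end Azuma

section TwoSidedTail

variable {m0 : MeasurableSpace Ω} {μ : Measure Ω} {Z : Ω → ℝ} {c : ℝ≥0}

lemma measureReal_le_abs_le_of_hasSubgaussianMGF (hZ : HasSubgaussianMGF Z c μ) {ε : ℝ}
    (hε : 0 ≤ ε) : μ.real {ω | ε ≤ |Z ω|} ≤ 2 * Real.exp (-ε ^ 2 / (2 * c)) := by
  calc μ.real {ω | ε ≤ |Z ω|}
      = μ.real ({ω | ε ≤ Z ω} ∪ {ω | ε ≤ (-Z) ω}) := by
        congr 1
        ext ω
        exact le_abs (a := ε) (b := Z ω)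
    _ ≤ μ.real {ω | ε ≤ Z ω} + μ.real {ω | ε ≤ (-Z) ω} := measureReal_union_le _ _
    _ ≤ Real.exp (-ε ^ 2 / (2 * c)) + Real.exp (-ε ^ 2 / (2 * c)) :=
        add_le_add (hZ.measure_ge_le hε) (hZ.neg.measure_ge_le hε)
    _ = 2 * Real.exp (-ε ^ 2 / (2 * c)) := (two_mul _).symm

lemma one_sub_le_measureReal_abs_le_of_hasSubgaussianMGF [IsProbabilityMeasure μ]
    (hZ : HasSubgaussianMGF Z c μ) (hc : c ≠ 0) {α : ℝ} (hα0 : 0 < α) (hα1 : α < 1) :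
    1 - α ≤ μ.real {ω | |Z ω| ≤ √(2 * c * Real.log (2 / α))} := by
  have hL : 0 < Real.log (2 / α) := Real.log_pos ((one_lt_div hα0).2 (by linarith))
  set r := √(2 * c * Real.log (2 / α)) with hr
  have tail : μ.real {ω | r ≤ |Z ω|} ≤ α := by
    refine (measureReal_le_abs_le_of_hasSubgaussianMGF hZ (Real.sqrt_nonneg _)).trans_eq ?_
    have hc' : (c : ℝ) ≠ 0 := NNReal.coe_ne_zero.2 hc
    have exponent_eq : -r ^ 2 / (2 * c) = -Real.log (2 / α) := by
      rw [hr, Real.sq_sqrt (by positivity)]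
      field_simp
    rw [exponent_eq, Real.exp_neg, Real.exp_log (by positivity), inv_div]
    ring
  have cover : (Set.univ : Set Ω) ⊆ {ω | |Z ω| ≤ r} ∪ {ω | r ≤ |Z ω|} := fun ω _ ↦
    le_total |Z ω| r
  have total := (measureReal_mono (μ := μ) cover).trans (measureReal_union_le _ _)
  rw [probReal_univ] at total
  linarith

end TwoSidedTail

section ElephantRandomWalk

/-- The quasi-score of the elephant random walk at `p`, a martingale in `n` whose zero as a function
of `p` is the estimator `p̂_n`. The sum effectively runs over `1 ≤ k ≤ n - 1`: the term `k = 0`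
vanishes because `S_0 / 0 = 0`. -/
def erwScore (X : ℕ → Ω → ℝ) (p : ℝ) (n : ℕ) (ω : Ω) : ℝ :=
  ∑ k ∈ range n, erwS X k ω / k * (X (k + 1) ω - (2 * p - 1) * (erwS X k ω / k))

variable {m0 : MeasurableSpace Ω} {μ : Measure Ω} {ℱ : Filtration ℕ m0} {X : ℕ → Ω → ℝ} {p : ℝ}

lemma abs_erwS_div_le_one (hX : ∀ n, 1 ≤ n → ∀ ω, |X n ω| ≤ 1) (n : ℕ) (ω : Ω) :
    |erwS X n ω / n| ≤ 1 := by
  rw [abs_div, Nat.abs_cast]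
  refine div_le_one_of_le₀ ?_ n.cast_nonneg
  calc |erwS X n ω| ≤ ∑ k ∈ Icc 1 n, |X k ω| := abs_sum_le_sum_abs _ _
    _ ≤ ∑ _k ∈ Icc 1 n, (1 : ℝ) := sum_le_sum fun k hk ↦ hX k (mem_Icc.1 hk).1 ω
    _ = n := by simp

lemma measurable_erwS (hXm : ∀ n, 1 ≤ n → Measurable[ℱ n] (X n)) (n : ℕ) :
    Measurable[ℱ n] (erwS X n) :=
  Finset.measurable_fun_sum _ fun k hk ↦
    (hXm k (mem_Icc.1 hk).1).mono (ℱ.mono (mem_Icc.1 hk).2) le_rfl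

lemma erwV_pos {ω : Ω} (hX1 : X 1 ω ≠ 0) {n : ℕ} (hn : 2 ≤ n) : 0 < erwV X n ω := by
  refine mul_pos four_pos (sum_pos' (fun _ _ ↦ sq_nonneg _) ⟨1, mem_Icc.2 ⟨le_rfl, by omega⟩, ?_⟩)
  simpa [erwS] using sq_pos_of_ne_zero hX1

lemma erwScore_eq_sum_Icc (n : ℕ) (ω : Ω) : erwScore X p n ω =
    ∑ k ∈ Icc 1 (n - 1), erwS X k ω / k * (X (k + 1) ω - (2 * p - 1) * (erwS X k ω / k)) := by
  refine (sum_subset (fun k hk ↦ ?_) fun k hk hk' ↦ ?_).symm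
  · rw [mem_Icc] at hk
    exact mem_range.2 (by omega)
  · obtain rfl : k = 0 := by
      rw [mem_range] at hk
      rw [mem_Icc] at hk'
      omega
    simp

lemma erwV_mul_erwPhat_sub {n : ℕ} {ω : Ω} (hV : erwV X n ω ≠ 0) :
    erwV X n ω * (erwPhat X n ω - p) = 2 * erwScore X p n ω := by
  have score_eq : erwScore X p n ω =
      ∑ k ∈ Icc 1 (n - 1), erwS X k ω / k * (X (k + 1) ω + erwS X k ω / k) -
        2 * p * ∑ k ∈ Icc 1 (n - 1), (erwS X k ω / k) ^ 2 := by
    rw [erwScore_eq_sum_Icc, mul_sum, ← sum_sub_distrib]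
    exact sum_congr rfl fun k _ ↦ by ring
  rw [score_eq, erwV, erwPhat]
  set T := ∑ k ∈ Icc 1 (n - 1), (erwS X k ω / k) ^ 2
  have hT : T ≠ 0 := right_ne_zero_of_mul hV
  field_simp
  ring

lemma erwV_mul_abs_erwPhat_sub {n : ℕ} {ω : Ω} (hV : 0 < erwV X n ω) :
    erwV X n ω * |erwPhat X n ω - p| = 2 * |erwScore X p n ω| := by
  rw [← abs_of_pos hV, ← abs_mul, erwV_mul_erwPhat_sub hV.ne', abs_mul, abs_two]

theorem hasSubgaussianMGF_erwScore [IsProbabilityMeasure μ]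
    (hX : ∀ n, 1 ≤ n → ∀ ω, |X n ω| ≤ 1) (hXm : ∀ n, 1 ≤ n → Measurable[ℱ n] (X n))
    (hE : ∀ n, 1 ≤ n → μ[X (n + 1) | ℱ n] =ᵐ[μ] fun ω ↦ (2 * p - 1) * (erwS X n ω / n)) (n : ℕ) :
    HasSubgaussianMGF (erwScore X p n) n μ := by
  have azuma := hasSubgaussianMGF_sum_mul_sub_condExp (μ := μ) ℱ
    (s := fun k ω ↦ erwS X k ω / k) (Y := fun k ↦ X (k + 1)) (σ := fun _ ↦ 1)
    (fun k ↦ ((measurable_erwS hXm k).div_const _).stronglyMeasurable)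
    (fun k ↦ .of_forall (abs_erwS_div_le_one hX k))
    (fun k ↦ (hXm (k + 1) k.succ_pos).stronglyMeasurable)
    (fun k ↦ .of_forall (hX (k + 1) k.succ_pos)) n
  have drift (k : ℕ) : ∀ᵐ ω ∂μ, erwS X k ω / k * (X (k + 1) ω - (μ[X (k + 1) | ℱ k]) ω) =
      erwS X k ω / k * (X (k + 1) ω - (2 * p - 1) * (erwS X k ω / k)) := by
    rcases k.eq_zero_or_pos with rfl | hk
    · simp
    · filter_upwards [hE k hk] with ω hω
      rw [hω]
  simp only [one_pow, sum_const, card_range, nsmul_one] at azuma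
  refine azuma.congr ?_
  filter_upwards [ae_all_iff.2 drift] with ω hω
  exact sum_congr rfl fun k _ ↦ hω k

lemma IsERW.abs_step_le_one (h : IsERW μ ℱ X p) (n : ℕ) (hn : 1 ≤ n) (ω : Ω) : |X n ω| ≤ 1 :=
  ((abs_eq zero_le_one).2 (h.2.2.1 n hn ω)).le

lemma IsERW.step_one_ne_zero (h : IsERW μ ℱ X p) (ω : Ω) : X 1 ω ≠ 0 := by
  rcases h.2.2.1 1 le_rfl ω with hω | hω <;> simp [hω]

end ElephantRandomWalk

theorem erw_exact_confidence_interval_general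
    {m0 : MeasurableSpace Ω} (μ : Measure Ω) [IsProbabilityMeasure μ]
    (ℱ : Filtration ℕ m0) (X : ℕ → Ω → ℝ) (p : ℝ)
    (hX : ∀ n, 1 ≤ n → ∀ ω, |X n ω| ≤ 1) (hX1 : ∀ ω, X 1 ω ≠ 0)
    (hXm : ∀ n, 1 ≤ n → Measurable[ℱ n] (X n))
    (hE : ∀ n, 1 ≤ n → μ[X (n + 1) | ℱ n] =ᵐ[μ] fun ω ↦ (2 * p - 1) * (erwS X n ω / n)) :
    ∀ n, 2 ≤ n →
      (∀ α : ℝ, 0 < α → α < 1 →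
        1 - α ≤ μ.real {ω | |erwPhat X n ω - p| ≤
          2 * √(2 * n * Real.log (2 / α)) / erwV X n ω}) ∧
      (∀ x : ℝ, 0 < x →
        μ.real {ω | 2 * n * x ≤ erwV X n ω * |erwPhat X n ω - p|} ≤
          2 * Real.exp (-(n * x ^ 2) / 2)) := by
  intro n hn
  have hn0 : (n : ℝ≥0) ≠ 0 := by exact_mod_cast (by omega : n ≠ 0)
  have score_subgaussian := hasSubgaussianMGF_erwScore hX hXm hE n
  have hV (ω : Ω) : 0 < erwV X n ω := erwV_pos (hX1 ω) hn
  constructor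
  · intro α hα0 hα1
    refine (one_sub_le_measureReal_abs_le_of_hasSubgaussianMGF score_subgaussian hn0 hα0 hα1).trans
      (measureReal_mono fun ω hω ↦ (le_div_iff₀' (hV ω)).2 ?_)
    rw [erwV_mul_abs_erwPhat_sub (hV ω)]
    exact mul_le_mul_of_nonneg_left hω zero_le_two
  · intro x hx
    calc μ.real {ω | 2 * n * x ≤ erwV X n ω * |erwPhat X n ω - p|}
        = μ.real {ω | n * x ≤ |erwScore X p n ω|} := by
          simp only [erwV_mul_abs_erwPhat_sub (hV _), mul_assoc, mul_le_mul_iff_right₀ two_pos]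
      _ ≤ 2 * Real.exp (-(n * x) ^ 2 / (2 * n)) :=
          measureReal_le_abs_le_of_hasSubgaussianMGF score_subgaussian (by positivity)
      _ = 2 * Real.exp (-(n * x ^ 2) / 2) := by
          field_simp

/-- Exact (non-asymptotic) confidence interval: for every `p ∈ [0,1]`, `α ∈ (0,1)` and
`n ≥ 2`, `P(|p̂_n - p| ≤ 2 √(3 n log(2/α)) / V_n) ≥ 1 - α`; equivalently, for every
`x > 0`, `P(V_n |p̂_n - p| ≥ 2 n x) ≤ 2 exp(-n x²/3)`. -/
theorem erw_exact_confidence_interval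
    {m0 : MeasurableSpace Ω} (μ : Measure Ω) [IsProbabilityMeasure μ]
    (ℱ : Filtration ℕ m0) (X : ℕ → Ω → ℝ) (p : ℝ)
    (hERW : IsERW μ ℱ X p) :
    ∀ n, 2 ≤ n →
      (∀ α : ℝ, 0 < α → α < 1 →
        1 - α ≤ (μ {ω | |erwPhat X n ω - p| ≤
          2 * Real.sqrt (3 * n * Real.log (2 / α)) / erwV X n ω}).toReal) ∧
      (∀ x : ℝ, 0 < x →
        (μ {ω | 2 * n * x ≤ erwV X n ω * |erwPhat X n ω - p|}).toReal ≤
          2 * Real.exp (-(n * x ^ 2) / 3)) := by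
  intro n hn
  have hX1 := hERW.step_one_ne_zero
  obtain ⟨hconf, htail⟩ := erw_exact_confidence_interval_general μ ℱ X p
    hERW.abs_step_le_one hX1 hERW.2.2.2.1 hERW.2.2.2.2 n hn
  refine ⟨fun α hα0 hα1 ↦ (hconf α hα0 hα1).trans (measureReal_mono fun ω hω ↦ ?_),
    fun x hx ↦ (htail x hx).trans ?_⟩
  · have hV : 0 ≤ erwV X n ω := (erwV_pos (hX1 ω) hn).le
    have hL : 0 ≤ Real.log (2 / α) := Real.log_nonneg ((one_le_div hα0).2 (by linarith))
    refine (Set.mem_ofPred_eq ▸ hω).trans ?_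
    gcongr
    norm_num
  · gcongr 2 * Real.exp ?_
    linarith [mul_nonneg n.cast_nonneg (sq_nonneg x)]
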